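/- Every 5-tuple (g_1,…,g_5) of order-2 elements of the alternating group A6 on 6 letters with g_1 g_2 g_3 g_4 g_5 = 1 whose generated subgroup acts transitively on the 6 letters is related, by the equivalence relation generated by the Hurwitz moves together with simultaneous conjugation of all entries by a single element of S6, to exactly one of the following three tuples: [1] ((1 2)(3 4), (1 2)(3 4), (1 3)(2 5), (1 3)(4 6), (2 5)(4 6)); [2] ((1 2)(3 4), (1 3)(2 4), (1 4)(2 3), (1 5)(2 6), (1 5)(2 6)); [3] ((1 2)(3 4), (1 3)(2 4), (1 4)(2 5), (1 6)(2 3), (1 6)(3 5)). These three tuples generate subgroups of A6 of orders 60, 24, and 360, respectively. -/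

import Mathlib

/-- The `i`-th Hurwitz move on `k`-tuples of elements of a group `G`:
`(g₁,…,gₖ) ↦ (g₁,…,g_{i-1}, g_{i+1}, g_{i+1}⁻¹ g_i g_{i+1}, g_{i+2},…,gₖ)`. -/
def HurwitzMove {G : Type*} [Group G] {k : ℕ} (g h : Fin k → G) : Prop :=
  ∃ i : ℕ, ∃ hi : i + 1 < k,
    h ⟨i, Nat.lt_of_succ_lt hi⟩ = g ⟨i + 1, hi⟩ ∧
    h ⟨i + 1, hi⟩ = (g ⟨i + 1, hi⟩)⁻¹ * g ⟨i, Nat.lt_of_succ_lt hi⟩ * g ⟨i + 1, hi⟩ ∧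
    ∀ j : Fin k, (j : ℕ) ≠ i → (j : ℕ) ≠ i + 1 → h j = g j

/-- Hurwitz equivalence: the equivalence relation generated by the Hurwitz moves. -/
def HurwitzEquiv {G : Type*} [Group G] {k : ℕ} (g h : Fin k → G) : Prop :=
  Relation.EqvGen HurwitzMove g h

/-- The Nielsen class `Ni(A₆, C_{2×2}^k)`: `k`-tuples of order-2 elements of `A₆`
(products of two disjoint transpositions) with product `1` generating `A₆`. -/
def NielsenSet (k : ℕ) : Set (Fin k → Equiv.Perm (Fin 6)) :=
  {g | (∀ i, g i ∈ alternatingGroup (Fin 6)) ∧ (∀ i, orderOf (g i) = 2) ∧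
       (List.ofFn g).prod = 1 ∧
       Subgroup.closure (Set.range g) = alternatingGroup (Fin 6)}

/-- One step of the absolute equivalence: a Hurwitz move, or simultaneous
conjugation of all entries by a single element of `S₆`. -/
def AbsRel (k : ℕ) (g h : Fin k → Equiv.Perm (Fin 6)) : Prop :=
  HurwitzMove g h ∨ ∃ s : Equiv.Perm (Fin 6), h = fun i => s⁻¹ * g i * s

/-- One step of the inner equivalence: a Hurwitz move, or simultaneous
conjugation of all entries by a single element of `A₆`. -/
def InnerRel (k : ℕ) (g h : Fin k → Equiv.Perm (Fin 6)) : Prop :=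
  HurwitzMove g h ∨
    ∃ s ∈ alternatingGroup (Fin 6), h = fun i => s⁻¹ * g i * s

/-- The set of fixed points of a permutation. -/
def FixedPts {n : ℕ} (g : Equiv.Perm (Fin n)) : Set (Fin n) := {x | g x = x}

/-- The representative tuple `[1] = ((1 2)(3 4), (1 2)(3 4), (1 3)(2 5),
(1 3)(4 6), (2 5)(4 6))`, written on `Fin 6 = {0,…,5}`. -/
def tuple1 : Fin 5 → Equiv.Perm (Fin 6) :=
  ![Equiv.swap 0 1 * Equiv.swap 2 3,
    Equiv.swap 0 1 * Equiv.swap 2 3,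
    Equiv.swap 0 2 * Equiv.swap 1 4,
    Equiv.swap 0 2 * Equiv.swap 3 5,
    Equiv.swap 1 4 * Equiv.swap 3 5]

/-- The representative tuple `[2] = ((1 2)(3 4), (1 3)(2 4), (1 4)(2 3),
(1 5)(2 6), (1 5)(2 6))`, written on `Fin 6 = {0,…,5}`. -/
def tuple2 : Fin 5 → Equiv.Perm (Fin 6) :=
  ![Equiv.swap 0 1 * Equiv.swap 2 3,
    Equiv.swap 0 2 * Equiv.swap 1 3,
    Equiv.swap 0 3 * Equiv.swap 1 2,
    Equiv.swap 0 4 * Equiv.swap 1 5,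
    Equiv.swap 0 4 * Equiv.swap 1 5]

/-- The representative tuple `[3] = ((1 2)(3 4), (1 3)(2 4), (1 4)(2 5),
(1 6)(2 3), (1 6)(3 5))`, written on `Fin 6 = {0,…,5}`. -/
def tuple3 : Fin 5 → Equiv.Perm (Fin 6) :=
  ![Equiv.swap 0 1 * Equiv.swap 2 3,
    Equiv.swap 0 2 * Equiv.swap 1 3,
    Equiv.swap 0 3 * Equiv.swap 1 4,
    Equiv.swap 0 5 * Equiv.swap 1 2,
    Equiv.swap 0 5 * Equiv.swap 2 4]

/-!
Hurwitz moves do not change the generated subgroup, and conjugation only replaces it by a conjugate,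
so the orders `60`, `24`, `360` separate the three tuples.

For the converse, call two involutions close if their product has at least two fixed points. Any
three double transpositions are Hurwitz equivalent to three whose first two are close. In a
transitive factorization this is improved step by step: the first two entries can be made close,
then commuting, then commuting with the same support. After that either they can be made equal, or
they are distinct and the third and fourth entries can be made close but not commuting. Up to a
relabelling of the six letters only finitely many factorizations satisfy each of these conditions,
and for each of them an explicit braid word (found by computer search) leads to the next condition
or, in the final two cases, to `[1]` or `[2]` and to `[3]` respectively.
-/

section Braid

variable {G H : Type*} [Group G] [Group H]

/-- A single Hurwitz move, on words of arbitrary length. -/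
inductive BraidStep : List G → List G → Prop
  | intro (l : List G) (a b : G) (r : List G) :
      BraidStep (l ++ a :: b :: r) (l ++ b :: (b⁻¹ * a * b) :: r)

/-- Hurwitz equivalence of words. -/
def BraidEquiv : List G → List G → Prop :=
  Relation.EqvGen BraidStep

/-- A Hurwitz move, or simultaneous conjugation of all letters. -/
def ConjBraidStep (l l' : List G) : Prop :=
  BraidStep l l' ∨ ∃ s : G, l' = l.map (MulAut.conj s)

/-- The equivalence relation on words generated by Hurwitz moves and simultaneous conjugation. -/
def ConjBraidEquiv : List G → List G → Prop :=
  Relation.EqvGen ConjBraidStep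

/-- The Hurwitz move at position `i`, counted from `0`, as a function; it does nothing when there is
no letter at position `i + 1`. -/
def braidMove : ℕ → List G → List G
  | 0, a :: b :: l => b :: (b⁻¹ * a * b) :: l
  | i + 1, a :: l => a :: braidMove i l
  | _, l => l

/-- The Hurwitz moves at the positions listed in `w`, performed from left to right. -/
def braidWord (w : List ℕ) (l : List G) : List G :=
  w.foldl (fun l i => braidMove i l) l

theorem eq_of_eqvGen {α β : Type*} {r : α → α → Prop} (f : α → β)
    (hf : ∀ x y, r x y → f x = f y) {x y : α} (h : Relation.EqvGen r x y) : f x = f y :=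
  congrArg (Quot.lift f hf) (Quot.eqvGen_sound h)

theorem eqvGen_map {α β : Type*} {r : α → α → Prop} {r' : β → β → Prop} (f : α → β)
    (hf : ∀ x y, r x y → r' (f x) (f y)) {x y : α} (h : Relation.EqvGen r x y) :
    Relation.EqvGen r' (f x) (f y) := by
  induction h with
  | rel x y h => exact .rel _ _ (hf x y h)
  | refl => exact .refl _
  | symm _ _ _ ih => exact ih.symm
  | trans _ _ _ _ _ ih₁ ih₂ => exact ih₁.trans _ _ _ ih₂

@[refl]
theorem BraidEquiv.refl (l : List G) : BraidEquiv l l :=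
  Relation.EqvGen.refl l

theorem BraidEquiv.trans {l₁ l₂ l₃ : List G} (h : BraidEquiv l₁ l₂) (h' : BraidEquiv l₂ l₃) :
    BraidEquiv l₁ l₃ :=
  Relation.EqvGen.trans _ _ _ h h'

theorem BraidEquiv.append_right {l l' : List G} (h : BraidEquiv l l') (r : List G) :
    BraidEquiv (l ++ r) (l' ++ r) := by
  refine eqvGen_map (· ++ r) ?_ h
  rintro _ _ ⟨l, a, b, s⟩
  simpa using BraidStep.intro l a b (s ++ r)

theorem BraidEquiv.append_left {l l' : List G} (h : BraidEquiv l l') (r : List G) :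
    BraidEquiv (r ++ l) (r ++ l') := by
  refine eqvGen_map (r ++ ·) ?_ h
  rintro _ _ ⟨l, a, b, s⟩
  simpa using BraidStep.intro (r ++ l) a b s

theorem BraidEquiv.conjBraidEquiv {l l' : List G} (h : BraidEquiv l l') : ConjBraidEquiv l l' :=
  h.mono fun _ _ => Or.inl

theorem ConjBraidEquiv.conj (l : List G) (s : G) : ConjBraidEquiv l (l.map (MulAut.conj s)) :=
  .rel _ _ (.inr ⟨s, rfl⟩)

theorem ConjBraidEquiv.trans {l₁ l₂ l₃ : List G} (h : ConjBraidEquiv l₁ l₂)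
    (h' : ConjBraidEquiv l₂ l₃) : ConjBraidEquiv l₁ l₃ :=
  Relation.EqvGen.trans _ _ _ h h'

theorem braidEquiv_braidMove (i : ℕ) (l : List G) : BraidEquiv l (braidMove i l) := by
  induction i, l using braidMove.induct with
  | case1 a b l => exact .rel _ _ (.intro [] a b l)
  | case2 i a l ih => exact ih.append_left [a]
  | case3 i l h₁ h₂ => rw [braidMove.eq_3 i l h₁ h₂]

theorem braidEquiv_braidWord (w : List ℕ) (l : List G) : BraidEquiv l (braidWord w l) := by
  induction w generalizing l with
  | nil => exact .refl _
  | cons i w ih => exact (braidEquiv_braidMove i l).trans (ih _)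

theorem map_braidMove (f : G →* H) (i : ℕ) (l : List G) :
    (braidMove i l).map f = braidMove i (l.map f) := by
  fun_induction braidMove i l with
  | case1 => simp [braidMove]
  | case2 i a l ih => simp [braidMove, ih]
  | case3 i l h₁ h₂ =>
    refine (braidMove.eq_3 i _ ?_ ?_).symm
    · rintro a b t rfl ht
      obtain ⟨a, _, rfl, -, hb⟩ := List.map_eq_cons_iff.1 ht
      obtain ⟨b, t, rfl, -, -⟩ := List.map_eq_cons_iff.1 hb
      exact h₁ a b t rfl rfl
    · rintro j a t rfl ht
      obtain ⟨a, t, rfl, -, -⟩ := List.map_eq_cons_iff.1 ht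
      exact h₂ j a t rfl rfl

theorem map_braidWord (f : G →* H) (w : List ℕ) (l : List G) :
    (braidWord w l).map f = braidWord w (l.map f) := by
  induction w generalizing l with
  | nil => rfl
  | cons i w ih => exact (ih _).trans (congrArg _ (map_braidMove f i l))

theorem braidEquiv_cons_append_conj (a : G) (l : List G) :
    BraidEquiv (a :: l) (l ++ [l.prod⁻¹ * a * l.prod]) := by
  induction l generalizing a with
  | nil => simpa using BraidEquiv.refl [a]
  | cons b l ih =>
    have hstep : BraidEquiv (a :: b :: l) (b :: (b⁻¹ * a * b) :: l) := .rel _ _ (.intro [] a b l)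
    simpa [mul_assoc] using hstep.trans ((ih (b⁻¹ * a * b)).append_left [b])

theorem braidEquiv_rotate {l : List G} (h : l.prod = 1) (n : ℕ) : BraidEquiv l (l.rotate n) := by
  induction n with
  | zero => rw [List.rotate_zero]
  | succ n ih =>
    refine ih.trans ?_
    rw [← List.rotate_rotate]
    have hprod := List.prod_rotate_eq_one_of_prod_eq_one h n
    cases hr : l.rotate n with
    | nil => exact .refl _
    | cons a t =>
      rw [hr, List.prod_cons] at hprod
      have ha : t.prod⁻¹ * a * t.prod = a := by
        rw [← eq_inv_of_mul_eq_one_left hprod, mul_assoc, hprod, mul_one]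
      simpa only [ha, List.rotate_cons_succ, List.rotate_zero] using
        braidEquiv_cons_append_conj a t

end Braid

section Tuples

variable {G : Type*} [Group G] {k : ℕ}

theorem HurwitzMove.braidStep {g h : Fin k → G} (hgh : HurwitzMove g h) :
    BraidStep (List.ofFn g) (List.ofFn h) := by
  obtain ⟨i, hi, hfst, hsnd, hrest⟩ := hgh
  have hg : List.ofFn g = (List.ofFn g).take i ++
      g ⟨i, Nat.lt_of_succ_lt hi⟩ :: g ⟨i + 1, hi⟩ :: (List.ofFn g).drop (i + 2) := by
    refine List.ext_getElem (by simp; omega) fun j hj _ => ?_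
    grind
  have hh : List.ofFn h = (List.ofFn g).take i ++ g ⟨i + 1, hi⟩ ::
      ((g ⟨i + 1, hi⟩)⁻¹ * g ⟨i, Nat.lt_of_succ_lt hi⟩ * g ⟨i + 1, hi⟩) ::
        (List.ofFn g).drop (i + 2) := by
    refine List.ext_getElem (by simp; omega) fun j hj _ => ?_
    grind
  rw [hg, hh]
  exact .intro _ _ _ _

theorem BraidStep.hurwitzMove {g h : Fin k → G} (hgh : BraidStep (List.ofFn g) (List.ofFn h)) :
    HurwitzMove g h := by
  generalize hg : List.ofFn g = u, hh : List.ofFn h = v at hgh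
  obtain ⟨l, a, b, r⟩ := hgh
  have hk : k = l.length + (r.length + 2) := by simpa using congrArg List.length hg
  have hg' (j : Fin k) : g j = (l ++ a :: b :: r)[j]'(by simp; omega) := by simp [← hg]
  have hh' (j : Fin k) : h j = (l ++ b :: (b⁻¹ * a * b) :: r)[j]'(by simp; omega) := by
    simp [← hh]
  refine ⟨l.length, by omega, ?_, ?_, fun j hj hj' => ?_⟩ <;> simp only [hg', hh'] <;> grind

theorem absRel_iff_conjBraidStep {g h : Fin k → Equiv.Perm (Fin 6)} :
    AbsRel k g h ↔ ConjBraidStep (List.ofFn g) (List.ofFn h) := by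
  refine or_congr ⟨HurwitzMove.braidStep, BraidStep.hurwitzMove⟩ ⟨?_, ?_⟩
  · rintro ⟨s, rfl⟩
    exact ⟨s⁻¹, by simp [List.map_ofFn, Function.comp_def]⟩
  · rintro ⟨s, hs⟩
    rw [List.map_ofFn] at hs
    exact ⟨s⁻¹, by simpa [Function.comp_def] using List.ofFn_injective hs⟩

theorem BraidStep.length_eq {l l' : List G} (h : BraidStep l l') : l.length = l'.length := by
  cases h; simp

theorem BraidStep.prod_eq {l l' : List G} (h : BraidStep l l') : l.prod = l'.prod := by
  cases h; simp [mul_assoc]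

theorem BraidStep.closure_eq {l l' : List G} (h : BraidStep l l') :
    Subgroup.closure {g | g ∈ l} = Subgroup.closure {g | g ∈ l'} := by
  obtain ⟨l, a, b, r⟩ := h
  refine le_antisymm ((Subgroup.closure_le _).2 fun g hg => ?_)
    ((Subgroup.closure_le _).2 fun g hg => ?_)
  · set K := Subgroup.closure {g | g ∈ l ++ b :: (b⁻¹ * a * b) :: r}
    have hK (x) (hx : x ∈ l ++ b :: (b⁻¹ * a * b) :: r) : x ∈ K := Subgroup.subset_closure hx
    have hb : b ∈ K := hK b (by simp)
    have ha : a ∈ K := by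
      simpa [mul_assoc] using K.mul_mem (K.mul_mem hb (hK (b⁻¹ * a * b) (by simp))) (K.inv_mem hb)
    obtain hl | rfl | rfl | hr : g ∈ l ∨ g = a ∨ g = b ∨ g ∈ r := by simpa using hg
    exacts [hK g (by simp [hl]), ha, hb, hK g (by simp [hr])]
  · set K := Subgroup.closure {g | g ∈ l ++ a :: b :: r}
    have hK (x) (hx : x ∈ l ++ a :: b :: r) : x ∈ K := Subgroup.subset_closure hx
    have hb : b ∈ K := hK b (by simp)
    have hab : b⁻¹ * a * b ∈ K := K.mul_mem (K.mul_mem (K.inv_mem hb) (hK a (by simp))) hb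
    obtain hl | rfl | rfl | hr : g ∈ l ∨ g = b ∨ g = b⁻¹ * a * b ∨ g ∈ r := by simpa using hg
    exacts [hK g (by simp [hl]), hb, hab, hK g (by simp [hr])]

theorem ConjBraidStep.length_eq {l l' : List G} (h : ConjBraidStep l l') :
    l.length = l'.length := by
  obtain h | ⟨s, rfl⟩ := h
  · exact h.length_eq
  · simp

theorem ConjBraidStep.card_closure_eq {l l' : List G} (h : ConjBraidStep l l') :
    Nat.card (Subgroup.closure {g | g ∈ l}) = Nat.card (Subgroup.closure {g | g ∈ l'}) := by
  obtain h | ⟨s, rfl⟩ := h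
  · rw [h.closure_eq]
  · have : {g | g ∈ l.map (MulAut.conj s)} = (MulAut.conj s).toMonoidHom '' {g | g ∈ l} := by
      ext; simp
    rw [this, ← MonoidHom.map_closure]
    exact Nat.card_congr (Subgroup.equivMapOfInjective _ _ (MulAut.conj s).injective).toEquiv

theorem eqvGen_absRel_iff {g h : Fin k → Equiv.Perm (Fin 6)} :
    Relation.EqvGen (AbsRel k) g h ↔ ConjBraidEquiv (List.ofFn g) (List.ofFn h) := by
  refine ⟨eqvGen_map List.ofFn fun _ _ => absRel_iff_conjBraidStep.1, fun hgh => ?_⟩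
  generalize hu : List.ofFn g = u, hv : List.ofFn h = v at hgh
  induction hgh generalizing g h with
  | rel u v huv =>
    subst hu hv
    exact .rel _ _ (absRel_iff_conjBraidStep.2 huv)
  | refl => exact List.ofFn_injective (hu.trans hv.symm) ▸ .refl _
  | symm _ _ _ ih => exact (ih hv hu).symm
  | trans u w v huw _ ih₁ ih₂ =>
    have hlen : w.length = k := by
      rw [← eq_of_eqvGen List.length (fun _ _ => ConjBraidStep.length_eq) huw, ← hu,
        List.length_ofFn]
    subst hlen
    exact (ih₁ hu (List.ofFn_get w)).trans _ _ _ (ih₂ (List.ofFn_get w) hv)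

theorem ConjBraidEquiv.card_closure_eq {l l' : List G} (h : ConjBraidEquiv l l') :
    Nat.card (Subgroup.closure {g | g ∈ l}) = Nat.card (Subgroup.closure {g | g ∈ l'}) :=
  eq_of_eqvGen (fun l : List G => Nat.card (Subgroup.closure {g | g ∈ l}))
    (fun _ _ => ConjBraidStep.card_closure_eq) h

end Tuples

section HeadPair

variable {G H : Type*}

/-- The first two letters of a word are related by `R`. -/
def HeadPair (R : G → G → Prop) : List G → Prop
  | a :: b :: _ => R a b
  | _ => False

instance (R : G → G → Prop) [DecidableRel R] : DecidablePred (HeadPair R)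
  | a :: b :: _ => inferInstanceAs (Decidable (R a b))
  | [] | [_] => inferInstanceAs (Decidable False)

theorem HeadPair.and {R S : G → G → Prop} :
    ∀ {l : List G}, HeadPair R l → HeadPair S l → HeadPair (fun a b => R a b ∧ S a b) l
  | _ :: _ :: _, hR, hS => ⟨hR, hS⟩

theorem HeadPair.and_not {R S : G → G → Prop} :
    ∀ {l : List G}, HeadPair R l → ¬ HeadPair S l → HeadPair (fun a b => R a b ∧ ¬ S a b) l
  | _ :: _ :: _, hR, hS => ⟨hR, hS⟩

theorem HeadPair.append {R : G → G → Prop} (r : List G) :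
    ∀ {l : List G}, HeadPair R l → HeadPair R (l ++ r)
  | _ :: _ :: _, h => h

theorem headPair_map_iff {R : G → G → Prop} {R' : H → H → Prop} {f : G → H}
    (hf : ∀ a b, R' (f a) (f b) ↔ R a b) : ∀ l : List G, HeadPair R' (l.map f) ↔ HeadPair R l
  | a :: b :: _ => hf a b
  | [] | [_] => Iff.rfl

end HeadPair

section Labelling

open Equiv

variable {α : Type*}

/-- The action of a permutation of a six-element type on the labels `0, …, 5` given by `e`,
as a permutation of `ℕ` fixing every `n ≥ 6`. Equality of natural numbers is much cheaper for the
kernel than equality in `Fin 6`, which is why finite checks are run on these permutations. -/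
noncomputable def labelHom (e : α ≃ {n // n < 6}) : Perm α →* Perm ℕ :=
  Perm.extendDomainHom e

/-- The values of a permutation on `0, …, 5`. -/
def oneLine (g : Perm ℕ) : List ℕ :=
  (List.range 6).map g

theorem labelHom_apply (e : α ≃ {n // n < 6}) (g : Perm α) (x : α) :
    labelHom e g (e x) = e (g x) :=
  Perm.extendDomain_apply_image g e x

theorem labelHom_apply_of_le (e : α ≃ {n // n < 6}) (g : Perm α) {n : ℕ} (hn : 6 ≤ n) :
    labelHom e g n = n :=
  Perm.extendDomain_apply_not_subtype g e hn.not_gt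

theorem labelHom_injective (e : α ≃ {n // n < 6}) : Function.Injective (labelHom e) :=
  Perm.extendDomainHom_injective e

theorem forall_lt_six_iff (e : α ≃ {n // n < 6}) {p : ℕ → Prop} :
    (∀ n < 6, p n) ↔ ∀ x, p (e x) :=
  ⟨fun h x => h _ (e x).2, fun h n hn => by simpa using h (e.symm ⟨n, hn⟩)⟩

theorem oneLine_eq_iff {g h : Perm ℕ} : oneLine g = oneLine h ↔ ∀ n < 6, g n = h n := by
  simp [oneLine]

theorem labelHom_eq_of_oneLine_eq {e e' : α ≃ {n // n < 6}} {g g' : Perm α}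
    (h : oneLine (labelHom e g) = oneLine (labelHom e' g')) : labelHom e g = labelHom e' g' := by
  ext n
  obtain hn | hn := lt_or_ge n 6
  · exact oneLine_eq_iff.1 h n hn
  · rw [labelHom_apply_of_le e g hn, labelHom_apply_of_le e' g' hn]

theorem labelHom_conj (e e' : α ≃ {n // n < 6}) (g : Perm α) :
    labelHom e' (MulAut.conj (e.trans e'.symm) g) = labelHom e g := by
  refine labelHom_eq_of_oneLine_eq (oneLine_eq_iff.2 ((forall_lt_six_iff e).2 fun x => ?_))
  have := labelHom_apply e' (MulAut.conj (e.trans e'.symm) g) (e'.symm (e x))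
  simpa [labelHom_apply, MulAut.conj_apply, Perm.mul_apply, Perm.inv_def] using this

theorem labelHom_swap [DecidableEq α] (e : α ≃ {n // n < 6}) (x y : α) :
    labelHom e (swap x y) = swap (e x : ℕ) (e y) := by
  ext n
  obtain hn | hn := lt_or_ge n 6
  · revert n
    refine (forall_lt_six_iff e).2 fun z => ?_
    simp only [labelHom_apply, swap_apply_def, Subtype.val_inj, EmbeddingLike.apply_eq_iff_eq]
    split_ifs <;> rfl
  · rw [labelHom_apply_of_le e _ hn, swap_apply_of_ne_of_ne] <;> grind

theorem swap_mem_range_labelHom (e : α ≃ {n // n < 6}) {i j : ℕ} (hi : i < 6)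
    (hj : j < 6) : swap i j ∈ (labelHom e).range :=
  open scoped Classical in
  ⟨swap (e.symm ⟨i, hi⟩) (e.symm ⟨j, hj⟩), by simp [labelHom_swap]⟩

/-- The relation `R'` on permutations of `ℕ` expresses the relation `R` in every labelling. -/
def Encodes (R' : Perm ℕ → Perm ℕ → Prop) (R : Perm α → Perm α → Prop) : Prop :=
  ∀ (e : α ≃ {n // n < 6}) (a b : Perm α), R' (labelHom e a) (labelHom e b) ↔ R a b

/-- The product of the two permutations fixes at least two letters. For two double transpositions
on six letters this says that the product is trivial, a double transposition or a `3`-cycle. -/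
def Close (a b : Perm α) : Prop :=
  2 ≤ Nat.card (Function.fixedPoints (a * b))

/-- `Close`, for permutations acting on the labels `0, …, 5`. -/
def LabelClose (a b : Perm ℕ) : Prop :=
  2 ≤ Nat.count (fun n => a (b n) = n) 6

/-- The two permutations have the same fixed points. -/
def SameSupport (a b : Perm α) : Prop :=
  ∀ x, a x = x ↔ b x = x

/-- `SameSupport`, for permutations acting on the labels `0, …, 5`. -/
def LabelSameSupport (a b : Perm ℕ) : Prop :=
  ∀ n < 6, a n = n ↔ b n = n

/-- Equality, for permutations acting on the labels `0, …, 5`. -/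
def LabelEq (a b : Perm ℕ) : Prop :=
  oneLine a = oneLine b

/-- `Commute`, for permutations acting on the labels `0, …, 5`. -/
def LabelCommute (a b : Perm ℕ) : Prop :=
  LabelEq (a * b) (b * a)

instance : DecidableRel LabelClose := fun _ _ => inferInstanceAs (Decidable (_ ≤ _))
instance : DecidableRel LabelSameSupport := fun a b =>
  inferInstanceAs (Decidable (∀ n < 6, a n = n ↔ b n = n))
instance : DecidableRel LabelEq := fun _ _ => inferInstanceAs (Decidable (_ = _))
instance : DecidableRel LabelCommute := fun _ _ => inferInstanceAs (Decidable (LabelEq _ _))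

theorem encodes_close : Encodes (α := α) LabelClose Close := by
  intro e a b
  let := Nat.CountSet.fintype fun n => labelHom e a (labelHom e b n) = n
  rw [LabelClose, Close, Nat.count_eq_card_fintype, ← Nat.card_eq_fintype_card]
  refine iff_of_eq (congrArg _ (Nat.card_congr ?_).symm)
  refine (e.subtypeEquiv fun x => ?_).trans
    (Equiv.subtypeSubtypeEquivSubtypeInter _ fun n => labelHom e a (labelHom e b n) = n)
  rw [labelHom_apply, labelHom_apply, Subtype.val_inj, e.apply_eq_iff_eq]
  rfl

theorem encodes_sameSupport : Encodes (α := α) LabelSameSupport SameSupport := fun e a b => by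
  simp only [LabelSameSupport, SameSupport, forall_lt_six_iff e, labelHom_apply, Subtype.val_inj,
    e.apply_eq_iff_eq]

theorem encodes_eq : Encodes (α := α) LabelEq Eq := fun e _ _ =>
  ⟨fun h => labelHom_injective e (labelHom_eq_of_oneLine_eq h), fun h => h ▸ rfl⟩

theorem encodes_commute : Encodes (α := α) LabelCommute Commute := fun e a b => by
  rw [LabelCommute, ← map_mul, ← map_mul]
  exact encodes_eq e _ _

variable {R S : Perm α → Perm α → Prop} {R' S' : Perm ℕ → Perm ℕ → Prop}

theorem Encodes.and (hR : Encodes R' R) (hS : Encodes S' S) :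
    Encodes (fun a b => R' a b ∧ S' a b) fun a b => R a b ∧ S a b := fun e a b =>
  and_congr (hR e a b) (hS e a b)

theorem Encodes.and_not (hR : Encodes R' R) (hS : Encodes S' S) :
    Encodes (fun a b => R' a b ∧ ¬ S' a b) fun a b => R a b ∧ ¬ S a b := fun e a b =>
  and_congr (hR e a b) (not_congr (hS e a b))

theorem Encodes.headPair_map_iff (hR : Encodes R' R) (e : α ≃ {n // n < 6}) (l : List (Perm α)) :
    HeadPair R' (l.map (labelHom e)) ↔ HeadPair R l :=
  _root_.headPair_map_iff (hR e) l

end Labelling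

section NormalWords

open Equiv

/-- The double transpositions of the labels `0, …, 5`. -/
def doubleTranspositions : List (Perm ℕ) :=
  (List.range 6).flatMap fun i => (List.range 6).flatMap fun j => (List.range 6).flatMap fun k =>
    (List.range 6).filterMap fun l =>
      if i < j ∧ i < k ∧ k < l ∧ j ≠ k ∧ j ≠ l then some (swap i j * swap k l) else none

/-- The double transposition chosen as the first letter of every normal word. -/
def baseLetter : Perm ℕ :=
  swap 0 1 * swap 2 3

/-- The centralizer of `baseLetter` in the symmetric group of the labels. -/
def baseStabilizer : List (Perm ℕ) :=
  [1, swap 0 1].flatMap fun p => [1, swap 2 3].flatMap fun q =>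
    [1, swap 0 2 * swap 1 3].flatMap fun r => [1, swap 4 5].map fun s => p * q * r * s

/-- Representatives of the double transpositions up to conjugation by `baseStabilizer`. -/
def secondLetters : List (Perm ℕ) :=
  [swap 0 1 * swap 2 3, swap 0 1 * swap 2 4, swap 0 1 * swap 4 5, swap 0 2 * swap 1 3,
    swap 0 2 * swap 1 4, swap 0 2 * swap 4 5, swap 0 4 * swap 1 5, swap 0 4 * swap 2 5]

/-- The words of five involutions with product `1` whose first letter is `baseLetter`, whose second
letter is in `secondLetters` and whose next two letters are double transpositions, such that the
first two letters are related by `R` and the next two by `S`. -/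
def normalWords (R S : Perm ℕ → Perm ℕ → Prop) [DecidableRel R] [DecidableRel S] :
    List (List (Perm ℕ)) :=
  (secondLetters.filter (R baseLetter ·)).flatMap fun b => doubleTranspositions.flatMap fun c =>
    doubleTranspositions.filterMap fun d =>
      let p := baseLetter * b * c * d
      if LabelEq p p⁻¹ ∧ ¬ LabelEq p 1 ∧ S c d then some [baseLetter, b, c, d, p⁻¹] else none

/-- A proper nonempty set of labels is mapped into itself by every letter of the word. -/
def HasInvariantSet (l : List (Perm ℕ)) : Prop :=
  ∃ S ∈ (List.range 6).sublists, S ≠ [] ∧ S ≠ List.range 6 ∧ ∀ g ∈ l, ∀ n ∈ S, g n ∈ S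

instance : DecidablePred HasInvariantSet := fun _ =>
  inferInstanceAs (Decidable (∃ S ∈ (List.range 6).sublists, _))

/-- The words `l` and `l'` are conjugate by an element of `baseStabilizer`. -/
def BaseConj (l l' : List (Perm ℕ)) : Prop :=
  ∃ t ∈ baseStabilizer, l.map oneLine = (l'.map fun g => t * g * t⁻¹).map oneLine

instance : DecidableRel BaseConj := fun _ _ =>
  inferInstanceAs (Decidable (∃ t ∈ baseStabilizer, _))

/-- `tuple1`, in labels. -/
def labelTuple1 : List (Perm ℕ) :=
  [swap 0 1 * swap 2 3, swap 0 1 * swap 2 3, swap 0 2 * swap 1 4, swap 0 2 * swap 3 5,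
    swap 1 4 * swap 3 5]

/-- `tuple2Rotated`, in labels. -/
def labelTuple2 : List (Perm ℕ) :=
  [swap 0 1 * swap 2 3, swap 0 1 * swap 2 3, swap 0 2 * swap 4 5, swap 0 4 * swap 2 5,
    swap 0 5 * swap 2 4]

/-- `tuple3`, in labels. -/
def labelTuple3 : List (Perm ℕ) :=
  [swap 0 1 * swap 2 3, swap 0 2 * swap 1 3, swap 0 3 * swap 1 4, swap 0 5 * swap 1 2,
    swap 0 5 * swap 2 4]

theorem exists_baseStabilizer_conj_mem_secondLetters : ∀ b ∈ doubleTranspositions,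
    ∃ t ∈ baseStabilizer, LabelEq (t * baseLetter * t⁻¹) baseLetter ∧
      ∃ b' ∈ secondLetters, LabelEq (t * b * t⁻¹) b' := by
  decide +kernel

theorem exists_braidWord_headPair_close : ∀ b ∈ secondLetters, ∀ c ∈ doubleTranspositions,
    ∃ w ∈ [[], [1], [0, 1], [1, 1], [0, 0, 1], [0, 1, 1], [0, 0, 0, 1], [0, 0, 1, 1],
      [0, 0, 0, 0, 1]], HeadPair LabelClose (braidWord w [baseLetter, b, c]) := by
  decide +kernel

theorem exists_braidWord_headPair_commute :
    ∀ l ∈ normalWords (fun a b => LabelClose a b ∧ ¬ LabelCommute a b) LabelClose,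
      HasInvariantSet l ∨
        ∃ w ∈ [[1, 0, 2, 1], [3, 2, 1, 1, 1], [1, 2, 2, 1], [3, 2, 1, 1], [3, 2, 1], [0, 3, 2, 1]],
          HeadPair LabelCommute (braidWord w l) := by
  decide +kernel

theorem exists_braidWord_headPair_sameSupport :
    ∀ l ∈ normalWords (fun a b => LabelCommute a b ∧ ¬ LabelSameSupport a b) LabelClose,
      HasInvariantSet l ∨
        ∃ w ∈ [[], [2, 1, 1], [0, 2, 1, 1], [1, 2, 2, 1], [3, 2, 1, 1], [0, 0, 2, 1, 1],
          [0, 3, 2, 1, 1]], HeadPair LabelSameSupport (braidWord w (l.rotate 2)) := by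
  decide +kernel

theorem exists_braidWord_headPair_eq :
    ∀ l ∈ normalWords (fun a b => LabelSameSupport a b ∧ ¬ LabelEq a b)
      (fun a b => LabelClose a b ∧ LabelCommute a b),
      HasInvariantSet l ∨ ∃ w ∈ [[], [1, 1]], HeadPair LabelEq (braidWord w (l.rotate 2)) := by
  decide +kernel

theorem exists_baseConj_labelTuple1_or_labelTuple2 : ∀ l ∈ normalWords LabelEq LabelClose,
    HasInvariantSet l ∨ ∃ w ∈ [[], [2], [3], [2, 3], [3, 2], [2, 3, 2]],
      BaseConj (braidWord w l) labelTuple1 ∨ BaseConj (braidWord w l) labelTuple2 := by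
  decide +kernel

theorem exists_baseConj_labelTuple3 :
    ∀ l ∈ normalWords (fun a b => LabelSameSupport a b ∧ ¬ LabelEq a b)
      (fun a b => LabelClose a b ∧ ¬ LabelCommute a b),
      HasInvariantSet l ∨ ∃ w ∈ [[3], [2, 3], [3, 2], [2, 2, 3], [2, 3, 2], [2, 2, 3, 2]],
        BaseConj (braidWord w l) labelTuple3 := by
  decide +kernel

end NormalWords

section LabelTuples

open Equiv

theorem map_labelHom_tuple1 :
    (List.ofFn tuple1).map (labelHom Fin.equivSubtype) = labelTuple1 := by
  simp [tuple1, labelTuple1, labelHom_swap]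

theorem map_labelHom_tuple3 :
    (List.ofFn tuple3).map (labelHom Fin.equivSubtype) = labelTuple3 := by
  simp [tuple3, labelTuple3, labelHom_swap]

/-- `tuple2` with its last two entries moved to the front and then conjugated so that they become
`(0 1)(2 3)`. -/
def tuple2Rotated : List (Perm (Fin 6)) :=
  [swap 0 1 * swap 2 3, swap 0 1 * swap 2 3, swap 0 2 * swap 4 5, swap 0 4 * swap 2 5,
    swap 0 5 * swap 2 4]

theorem map_labelHom_tuple2Rotated :
    tuple2Rotated.map (labelHom Fin.equivSubtype) = labelTuple2 := by
  simp [tuple2Rotated, labelTuple2, labelHom_swap]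

theorem conjBraidEquiv_tuple2Rotated : ConjBraidEquiv tuple2Rotated (List.ofFn tuple2) := by
  have hprod : (List.ofFn tuple2).prod = 1 := by decide
  have hconj : ((List.ofFn tuple2).rotate 3).map
      (MulAut.conj (swap 1 2 * swap 2 4 * swap 3 5)) = tuple2Rotated := by decide
  rw [← hconj]
  exact ((braidEquiv_rotate hprod 3).conjBraidEquiv.trans (.conj _ _)).symm

end LabelTuples

section ClosureCard

open Equiv

/-- The product of the letters of `l` at the positions listed in `w`. -/
def evalWord {G : Type*} [Group G] (l : List G) (w : List ℕ) : G :=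
  (w.map (l.getD · 1)).prod

theorem evalWord_mem_closure {G : Type*} [Group G] (l : List G) (w : List ℕ) :
    evalWord l w ∈ Subgroup.closure {g | g ∈ l} := by
  refine Subgroup.list_prod_mem _ fun x hx => ?_
  obtain ⟨n, -, rfl⟩ := List.mem_map.1 hx
  by_cases hn : n < l.length
  · rw [List.getD_eq_getElem _ _ hn]
    exact Subgroup.subset_closure (List.getElem_mem hn)
  · rw [List.getD_eq_default _ _ (not_lt.1 hn)]
    exact one_mem _

theorem map_evalWord {G H : Type*} [Group G] [Group H] (f : G →* H) (l : List G) (w : List ℕ) :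
    f (evalWord l w) = evalWord (l.map f) w := by
  have hgetD (i : ℕ) : (l.map f).getD i 1 = f (l.getD i 1) := by
    rw [← map_one f, List.getD_map]
  simp only [evalWord, map_list_prod, List.map_map, Function.comp_def, hgetD]

theorem card_closure_eq_length {G : Type*} [Group G] [Finite G] (l : List G) (W : List (List ℕ))
    (hnil : [] ∈ W) (hnodup : (W.map (evalWord l)).Nodup)
    (hmul : ∀ g ∈ l, ∀ w ∈ W, ∃ w' ∈ W, g * evalWord l w = evalWord l w') :
    Nat.card (Subgroup.closure {g | g ∈ l}) = W.length := by
  have hclosure : (Subgroup.closure {g | g ∈ l} : Set G) = {x | x ∈ W.map (evalWord l)} := by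
    refine Set.Subset.antisymm (fun x hx => ?_) fun x hx => ?_
    · rw [SetLike.mem_coe, ← Subgroup.mem_toSubmonoid,
        Subgroup.closure_toSubmonoid_of_finite] at hx
      induction hx using Submonoid.closure_induction_left with
      | one => exact List.mem_map.2 ⟨[], hnil, rfl⟩
      | mul_left g hg _ _ ih =>
        obtain ⟨w, hw, rfl⟩ := List.mem_map.1 ih
        obtain ⟨w', hw', h⟩ := hmul g hg w hw
        exact List.mem_map.2 ⟨w', hw', h.symm⟩
    · obtain ⟨w, -, rfl⟩ := List.mem_map.1 hx
      exact evalWord_mem_closure l w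
  classical
  rw [← SetLike.coe_sort_coe, hclosure, ← List.coe_toFinset, Nat.card_coe_set_eq,
    Set.ncard_coe_finset, List.toFinset_card_of_nodup hnodup, List.length_map]

theorem card_closure_eq_length_of_map_labelHom {α : Type*} [Finite α] {e : α ≃ {n // n < 6}}
    {l : List (Perm α)} {l' : List (Perm ℕ)} (hl : l.map (labelHom e) = l') {W : List (List ℕ)}
    (hnil : [] ∈ W) (hnodup : (W.map fun w => oneLine (evalWord l' w)).Nodup)
    (hmul : ∀ g ∈ l', ∀ w ∈ W, ∃ w' ∈ W, LabelEq (g * evalWord l' w) (evalWord l' w')) :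
    Nat.card (Subgroup.closure {g | g ∈ l}) = W.length := by
  subst hl
  simp only [← map_evalWord] at hnodup
  refine card_closure_eq_length l W hnil (.of_map (fun g => oneLine (labelHom e g)) ?_) ?_
  · rwa [List.map_map]
  · intro g hg w hw
    obtain ⟨w', hw', h⟩ := hmul _ (List.mem_map_of_mem hg) w hw
    rw [← map_evalWord, ← map_evalWord, ← map_mul] at h
    exact ⟨w', hw', (encodes_eq e _ _).1 h⟩

-- In the two lists of words below, `u` gives a transversal of the stabilizer of `0`, and the other
-- factors give that stabilizer.
theorem card_closure_tuple1 : Nat.card (Subgroup.closure {g | g ∈ List.ofFn tuple1}) = 60 :=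
  card_closure_eq_length_of_map_labelHom map_labelHom_tuple1
    (W := [[], [0], [2], [0, 2], [2, 0], [3, 0, 2]].flatMap fun u =>
      [[], [4], [0, 3, 0], [4, 0, 3, 0], [0, 2, 0, 2, 0]].flatMap fun v =>
        [[], [4, 0, 3, 0, 4]].map fun w => u ++ v ++ w)
    (by decide) (by decide +kernel) (by decide +kernel)

theorem card_closure_tuple2 : Nat.card (Subgroup.closure {g | g ∈ List.ofFn tuple2}) = 24 :=
  conjBraidEquiv_tuple2Rotated.card_closure_eq.symm.trans <|
    card_closure_eq_length_of_map_labelHom map_labelHom_tuple2Rotated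
      (W := [[], [0], [2], [3], [4], [0, 2]].flatMap fun u =>
        [[], [0, 2, 0], [0, 3, 0], [0, 4, 0]].map fun v => u ++ v)
      (by decide) (by decide +kernel) (by decide +kernel)

theorem exists_evalWord_labelTuple3 : ∀ i < 6, ∀ j < 6, i ≠ j →
    ∃ u ∈ [[], [0], [1], [2], [2, 0], [3]], ∃ v ∈ [[], [3, 4], [4, 3], [0, 4, 0], [3, 0, 3]],
      evalWord labelTuple3 (u ++ v) 0 = i ∧ evalWord labelTuple3 (u ++ v) 1 = j := by
  decide +kernel

theorem isMultiplyPretransitive_closure_tuple3 :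
    MulAction.IsMultiplyPretransitive (Subgroup.closure {g | g ∈ List.ofFn tuple3}) (Fin 6) 2 := by
  have hpair {x y : Fin 6} (hxy : x ≠ y) :
      ∃ g : Subgroup.closure {g | g ∈ List.ofFn tuple3},
        g • (0 : Fin 6) = x ∧ g • (1 : Fin 6) = y := by
    obtain ⟨u, -, v, -, hx, hy⟩ :=
      exists_evalWord_labelTuple3 x x.is_lt y y.is_lt (Fin.val_ne_iff.2 hxy)
    rw [← map_labelHom_tuple3, ← map_evalWord] at hx hy
    refine ⟨⟨_, evalWord_mem_closure _ (u ++ v)⟩, Fin.ext ?_, Fin.ext ?_⟩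
    · exact (labelHom_apply Fin.equivSubtype _ 0).symm.trans hx
    · exact (labelHom_apply Fin.equivSubtype _ 1).symm.trans hy
  refine MulAction.is_two_pretransitive_iff.2 fun {a b c d} hab hcd => ?_
  obtain ⟨g, rfl, rfl⟩ := hpair hab
  obtain ⟨h, rfl, rfl⟩ := hpair hcd
  exact ⟨h * g⁻¹, by simp [mul_smul], by simp [mul_smul]⟩

theorem closure_tuple3 :
    Subgroup.closure {g | g ∈ List.ofFn tuple3} = alternatingGroup (Fin 6) := by
  refine le_antisymm ((Subgroup.closure_le _).2 ?_) ?_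
  · have h : ∀ g ∈ List.ofFn tuple3, Perm.sign g = 1 := by decide +kernel
    exact fun g hg => Perm.mem_alternatingGroup.2 (h g hg)
  · have hprim :=
      MulAction.isPreprimitive_of_is_two_pretransitive isMultiplyPretransitive_closure_tuple3
    have hcycle : (tuple3 3 * tuple3 4).IsThreeCycle := by
      have : tuple3 3 * tuple3 4 = swap 2 1 * swap 2 4 := by decide
      rw [this]
      exact Perm.isThreeCycle_swap_mul_swap_same (by decide) (by decide) (by decide)
    have hmem (i) : tuple3 i ∈ Subgroup.closure {g | g ∈ List.ofFn tuple3} :=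
      Subgroup.subset_closure (List.mem_ofFn.2 ⟨i, rfl⟩)
    exact Perm.alternatingGroup_le_of_isPreprimitive_of_isThreeCycle_mem hprim hcycle
      (mul_mem (hmem 3) (hmem 4))

theorem card_closure_tuple3 : Nat.card (Subgroup.closure {g | g ∈ List.ofFn tuple3}) = 360 := by
  rw [closure_tuple3, nat_card_alternatingGroup, Nat.card_fin]
  rfl

end ClosureCard

section Factorizations

open Equiv

/-- The permutation is a product of two disjoint transpositions. -/
def IsDoubleTransposition {α : Type*} [Fintype α] [DecidableEq α] (g : Perm α) : Prop :=
  g.cycleType = {2, 2}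

/-- Factorizations of `1` into five double transpositions generating a transitive subgroup. -/
structure IsTransitiveFactorization (l : List (Perm (Fin 6))) : Prop where
  length_eq : l.length = 5
  isDoubleTransposition : ∀ g ∈ l, IsDoubleTransposition g
  prod_eq_one : l.prod = 1
  isPretransitive : MulAction.IsPretransitive (Subgroup.closure {g | g ∈ l}) (Fin 6)

theorem isDoubleTransposition_conj_iff {α : Type*} [Fintype α] [DecidableEq α] {g s : Perm α} :
    IsDoubleTransposition (s⁻¹ * g * s) ↔ IsDoubleTransposition g := by
  have := Perm.cycleType_conj (σ := g) (τ := s⁻¹)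
  rw [inv_inv] at this
  rw [IsDoubleTransposition, this, IsDoubleTransposition]

theorem IsDoubleTransposition.orderOf_eq_two {α : Type*} [Fintype α] [DecidableEq α] {g : Perm α}
    (hg : IsDoubleTransposition g) : orderOf g = 2 := by
  rw [← Perm.lcm_cycleType, hg]
  rfl

theorem isDoubleTransposition_of_orderOf_eq_two {g : Perm (Fin 6)}
    (hg : g ∈ alternatingGroup (Fin 6)) (horder : orderOf g = 2) : IsDoubleTransposition g := by
  obtain ⟨n, hn⟩ := Perm.cycleType_prime_order (σ := g) (by rw [horder]; exact Nat.prime_two)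
  rw [horder] at hn
  have hle : 2 * (n + 1) ≤ 6 := by
    simpa [hn, mul_comm, add_mul, add_comm] using
      g.sum_cycleType.trans_le (Finset.card_le_univ _)
  have hsign := Perm.mem_alternatingGroup.1 hg
  rw [Perm.sign_of_cycleType, hn] at hsign
  obtain rfl : n = 1 := by
    have : n ≤ 2 := by omega
    interval_cases n <;> first | rfl | exact absurd hsign (by decide)
  exact hn

theorem IsDoubleTransposition.exists_eq_conj {g : Perm (Fin 6)} (hg : IsDoubleTransposition g) :
    ∃ s : Perm (Fin 6), g = MulAut.conj s (swap 0 1 * swap 2 3) := by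
  have : IsConj (swap 0 1 * swap 2 3) g := by
    rw [Perm.isConj_iff_cycleType_eq, hg]
    decide
  obtain ⟨s, hs⟩ := isConj_iff.1 this
  exact ⟨s, hs.symm⟩

theorem IsDoubleTransposition.exists_labelHom_eq_baseLetter {g : Perm (Fin 6)}
    (hg : IsDoubleTransposition g) : ∃ e : Fin 6 ≃ {n // n < 6}, labelHom e g = baseLetter := by
  obtain ⟨s, rfl⟩ := hg.exists_eq_conj
  refine ⟨s⁻¹.trans Fin.equivSubtype, ?_⟩
  have := labelHom_conj Fin.equivSubtype (s⁻¹.trans Fin.equivSubtype) (swap 0 1 * swap 2 3)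
  have hs : Fin.equivSubtype.trans (s⁻¹.trans Fin.equivSubtype).symm = s := by
    ext; simp [Perm.inv_def]
  rw [hs] at this
  simpa [labelHom_swap, baseLetter] using this

theorem swap_mul_swap_mem_doubleTranspositions {i j k l : ℕ} (hi : i < 6) (hj : j < 6)
    (hk : k < 6) (hl : l < 6) (h : [i, j, k, l].Nodup) :
    swap i j * swap k l ∈ doubleTranspositions := by
  wlog hij : i < j generalizing i j
  · rw [swap_comm i j]
    exact this hj hi (by grind) (by grind)
  wlog hkl : k < l generalizing k l
  · rw [swap_comm k l]
    exact this hl hk (by grind) (by grind)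
  wlog hik : i < k generalizing i j k l
  · rw [(Perm.disjoint_swap_swap h).commute.eq]
    exact this hk hl hkl hi hj (List.nodup_append_comm (l₁ := [i, j]).1 h) hij (by grind)
  simp only [doubleTranspositions, List.mem_flatMap, List.mem_filterMap, List.mem_range]
  exact ⟨i, hi, j, hj, k, hk, l, hl, if_pos (by grind)⟩

theorem IsDoubleTransposition.labelHom_mem_doubleTranspositions {g : Perm (Fin 6)}
    (hg : IsDoubleTransposition g) (e : Fin 6 ≃ {n // n < 6}) :
    labelHom e g ∈ doubleTranspositions := by
  obtain ⟨s, rfl⟩ := hg.exists_eq_conj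
  rw [map_mul, MulAut.conj_apply, MulAut.conj_apply, ← swap_apply_apply, ← swap_apply_apply,
    map_mul, labelHom_swap, labelHom_swap]
  refine swap_mul_swap_mem_doubleTranspositions (e _).2 (e _).2 (e _).2 (e _).2 ?_
  have hnodup : [(0 : Fin 6), 1, 2, 3].Nodup := by decide
  exact hnodup.map (Subtype.val_injective.comp (e.injective.comp s.injective))

theorem mem_range_labelHom_of_mem_baseStabilizer {α : Type*}
    (e : α ≃ {n // n < 6}) {t : Perm ℕ} (ht : t ∈ baseStabilizer) : t ∈ (labelHom e).range := by
  have hswap {i j : ℕ} := swap_mem_range_labelHom e (i := i) (j := j)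
  simp only [baseStabilizer, List.mem_flatMap, List.mem_map, List.mem_cons, List.not_mem_nil,
    or_false] at ht
  obtain ⟨p, hp, q, hq, r, hr, s, hs, rfl⟩ := ht
  refine mul_mem (mul_mem (mul_mem ?_ ?_) ?_) ?_
  · obtain rfl | rfl := hp
    exacts [one_mem _, hswap (by decide) (by decide)]
  · obtain rfl | rfl := hq
    exacts [one_mem _, hswap (by decide) (by decide)]
  · obtain rfl | rfl := hr
    exacts [one_mem _, mul_mem (hswap (by decide) (by decide)) (hswap (by decide) (by decide))]
  · obtain rfl | rfl := hs
    exacts [one_mem _, hswap (by decide) (by decide)]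

theorem mem_range_labelHom_of_mem_secondLetters {α : Type*}
    (e : α ≃ {n // n < 6}) {b : Perm ℕ} (hb : b ∈ secondLetters) : b ∈ (labelHom e).range := by
  have hswap {i j : ℕ} := swap_mem_range_labelHom e (i := i) (j := j)
  simp only [secondLetters, List.mem_cons, List.not_mem_nil, or_false] at hb
  obtain rfl | rfl | rfl | rfl | rfl | rfl | rfl | rfl := hb <;>
    exact mul_mem (hswap (by decide) (by decide)) (hswap (by decide) (by decide))

theorem exists_labelHom_eq_baseLetter_mem_secondLetters {a b : Perm (Fin 6)}
    (ha : IsDoubleTransposition a) (hb : IsDoubleTransposition b) :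
    ∃ e : Fin 6 ≃ {n // n < 6}, labelHom e a = baseLetter ∧ labelHom e b ∈ secondLetters := by
  obtain ⟨e, he⟩ := ha.exists_labelHom_eq_baseLetter
  obtain ⟨t, ht, hbase, b', hb', hbb'⟩ :=
    exists_baseStabilizer_conj_mem_secondLetters _ (hb.labelHom_mem_doubleTranspositions e)
  obtain ⟨T, rfl⟩ := mem_range_labelHom_of_mem_baseStabilizer e ht
  obtain ⟨B, rfl⟩ := mem_range_labelHom_of_mem_secondLetters e hb'
  have hT (g : Perm (Fin 6)) : labelHom (T.trans e) g = labelHom e (T * g * T⁻¹) := by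
    rw [← labelHom_conj (T.trans e) e]
    congr 2
    ext; simp
  rw [← he, ← map_inv, ← map_mul, ← map_mul] at hbase
  rw [← map_inv, ← map_mul, ← map_mul] at hbb'
  refine ⟨T.trans e, ?_, ?_⟩
  · rw [hT, labelHom_eq_of_oneLine_eq hbase, he]
  · rwa [hT, labelHom_eq_of_oneLine_eq hbb']

theorem exists_braidEquiv_triple_headPair_close {a b c : Perm (Fin 6)}
    (ha : IsDoubleTransposition a) (hb : IsDoubleTransposition b) (hc : IsDoubleTransposition c) :
    ∃ l, BraidEquiv [a, b, c] l ∧ HeadPair Close l := by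
  obtain ⟨e, hbase, hsecond⟩ := exists_labelHom_eq_baseLetter_mem_secondLetters ha hb
  obtain ⟨w, -, hw⟩ :=
    exists_braidWord_headPair_close _ hsecond _ (hc.labelHom_mem_doubleTranspositions e)
  refine ⟨braidWord w [a, b, c], braidEquiv_braidWord _ _, ?_⟩
  rwa [← encodes_close.headPair_map_iff e, map_braidWord, List.map_cons, List.map_cons,
    List.map_singleton, hbase]

theorem BraidStep.isTransitiveFactorization_iff {l l' : List (Perm (Fin 6))} (h : BraidStep l l') :
    IsTransitiveFactorization l ↔ IsTransitiveFactorization l' := by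
  have hletters : (∀ g ∈ l, IsDoubleTransposition g) ↔ ∀ g ∈ l', IsDoubleTransposition g := by
    obtain ⟨l, a, b, r⟩ := h
    simp only [List.forall_mem_append, List.forall_mem_cons, isDoubleTransposition_conj_iff]
    tauto
  have hlength := h.length_eq
  have hprod := h.prod_eq
  have hclosure := h.closure_eq
  constructor
  · rintro ⟨h₁, h₂, h₃, h₄⟩
    exact ⟨hlength ▸ h₁, hletters.1 h₂, hprod ▸ h₃, hclosure ▸ h₄⟩
  · rintro ⟨h₁, h₂, h₃, h₄⟩
    exact ⟨hlength ▸ h₁, hletters.2 h₂, hprod ▸ h₃, hclosure ▸ h₄⟩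

namespace IsTransitiveFactorization

variable {l l' : List (Perm (Fin 6))}

theorem of_braidEquiv (hl : IsTransitiveFactorization l) (h : BraidEquiv l l') :
    IsTransitiveFactorization l' :=
  (eq_of_eqvGen _ (fun _ _ hstep => propext hstep.isTransitiveFactorization_iff) h).mp hl

open scoped Pointwise in
theorem not_hasInvariantSet (hl : IsTransitiveFactorization l) (e : Fin 6 ≃ {n // n < 6}) :
    ¬ HasInvariantSet (l.map (labelHom e)) := by
  rintro ⟨S, hS, hne, hproper, hinv⟩
  have hsub := List.mem_sublists.1 hS
  obtain ⟨n, hn⟩ := List.exists_mem_of_ne_nil S hne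
  let T : Set (Fin 6) := {x | (e x : ℕ) ∈ S}
  have hstab : Subgroup.closure {g | g ∈ l} ≤ MulAction.stabilizer (Perm (Fin 6)) T := by
    refine (Subgroup.closure_le _).2 fun g hg => ?_
    refine (MulAction.mem_stabilizer_set' T.toFinite).2 fun x hx => ?_
    have := hinv _ (List.mem_map_of_mem hg) _ hx
    rwa [labelHom_apply] at this
  have hT (y : Fin 6) : y ∈ T := by
    have := hl.isPretransitive
    have hx : e.symm ⟨n, List.mem_range.1 (hsub.subset hn)⟩ ∈ T := by simpa [T] using hn
    obtain ⟨g, rfl⟩ := MulAction.exists_smul_eq (Subgroup.closure {g | g ∈ l})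
      (e.symm ⟨n, List.mem_range.1 (hsub.subset hn)⟩) y
    exact (MulAction.mem_stabilizer_set' T.toFinite).1 (hstab g.2) hx
  have hrange : List.range 6 ⊆ S := fun m hm =>
    (forall_lt_six_iff e).2 hT m (List.mem_range.1 hm)
  exact hproper (hsub.eq_of_length_le (List.nodup_range.subperm hrange).length_le)

variable {R S P : Perm (Fin 6) → Perm (Fin 6) → Prop} {R' S' P' : Perm ℕ → Perm ℕ → Prop}
  [DecidableRel R']

theorem exists_map_labelHom_mem_normalWords [DecidableRel S'] (hl : IsTransitiveFactorization l)
    (hR : Encodes R' R) (hS : Encodes S' S) (hRl : HeadPair R l) (hSl : HeadPair S (l.drop 2)) :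
    ∃ e : Fin 6 ≃ {n // n < 6}, l.map (labelHom e) ∈ normalWords R' S' := by
  obtain ⟨a, b, c, d, f, rfl⟩ : ∃ a b c d f, [a, b, c, d, f] = l := by
    simpa [List.length_eq_succ_iff] using hl.length_eq
  have hletters := hl.isDoubleTransposition
  simp only [List.forall_mem_cons] at hletters
  obtain ⟨ha, hb, hc, hd, hf, -⟩ := hletters
  obtain ⟨e, hbase, hsecond⟩ := exists_labelHom_eq_baseLetter_mem_secondLetters ha hb
  have hprod : a * b * c * d * f = 1 := by simpa [mul_assoc] using hl.prod_eq_one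
  have hlast : baseLetter * labelHom e b * labelHom e c * labelHom e d = (labelHom e f)⁻¹ := by
    rw [← hbase, eq_inv_iff_mul_eq_one]
    simp only [← map_mul, hprod, map_one]
  have hinv : f⁻¹ = f := inv_eq_of_mul_eq_one_left (by
    rw [← sq, ← hf.orderOf_eq_two, pow_orderOf_eq_one])
  have hne : f ≠ 1 := fun h => by simpa [h] using hf.orderOf_eq_two
  have hRab : R' baseLetter (labelHom e b) := hbase ▸ (hR e a b).2 hRl
  have hlast_ne : ¬ LabelEq (labelHom e f) 1 := by
    rwa [← map_one (labelHom e), encodes_eq e]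
  refine ⟨e, List.mem_flatMap.2 ⟨_, List.mem_filter.2 ⟨hsecond, decide_eq_true hRab⟩,
    List.mem_flatMap.2 ⟨_, hc.labelHom_mem_doubleTranspositions e, List.mem_filterMap.2
      ⟨_, hd.labelHom_mem_doubleTranspositions e, ?_⟩⟩⟩⟩
  simp only [hlast, ← map_inv, hinv, hbase, List.map_cons, List.map_nil]
  exact if_pos ⟨rfl, hlast_ne, (hS e c d).2 hSl⟩

theorem exists_braidEquiv_headPair [DecidableRel S'] (hl : IsTransitiveFactorization l)
    (hR : Encodes R' R) (hS : Encodes S' S) (hP : Encodes P' P) (hRl : HeadPair R l)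
    (hSl : HeadPair S (l.drop 2)) {n : ℕ} {W : List (List ℕ)}
    (hwords : ∀ l ∈ normalWords R' S', HasInvariantSet l ∨
      ∃ w ∈ W, HeadPair P' (braidWord w (l.rotate n))) :
    ∃ l', BraidEquiv l l' ∧ HeadPair P l' := by
  obtain ⟨e, he⟩ := hl.exists_map_labelHom_mem_normalWords hR hS hRl hSl
  obtain ⟨w, -, hw⟩ := (hwords _ he).resolve_left (hl.not_hasInvariantSet e)
  refine ⟨braidWord w (l.rotate n),
    (braidEquiv_rotate hl.prod_eq_one n).trans (braidEquiv_braidWord _ _), ?_⟩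
  rwa [← hP.headPair_map_iff e, map_braidWord, List.map_rotate]

theorem exists_braidEquiv_headPair_close (hl : IsTransitiveFactorization l) :
    ∃ l', BraidEquiv l l' ∧ HeadPair Close l' := by
  obtain ⟨a, b, c, d, f, rfl⟩ : ∃ a b c d f, [a, b, c, d, f] = l := by
    simpa [List.length_eq_succ_iff] using hl.length_eq
  have hletters := hl.isDoubleTransposition
  obtain ⟨t, hbraid, ht⟩ := exists_braidEquiv_triple_headPair_close
    (hletters a (by simp)) (hletters b (by simp)) (hletters c (by simp))
  exact ⟨t ++ [d, f], hbraid.append_right [d, f], ht.append _⟩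

theorem exists_braidEquiv_drop_two_headPair_close (hl : IsTransitiveFactorization l)
    (hR : HeadPair R l) :
    ∃ l', BraidEquiv l l' ∧ HeadPair R l' ∧ HeadPair Close (l'.drop 2) := by
  obtain ⟨a, b, c, d, f, rfl⟩ : ∃ a b c d f, [a, b, c, d, f] = l := by
    simpa [List.length_eq_succ_iff] using hl.length_eq
  have hletters := hl.isDoubleTransposition
  obtain ⟨t, hbraid, ht⟩ := exists_braidEquiv_triple_headPair_close
    (hletters c (by simp)) (hletters d (by simp)) (hletters f (by simp))
  exact ⟨[a, b] ++ t, hbraid.append_left [a, b], hR, ht⟩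

theorem exists_braidEquiv_headPair_of_normalWords [DecidableRel P']
    (hl : IsTransitiveFactorization l) (hR : Encodes R' R) (hP : Encodes P' P)
    (h : ∃ l', BraidEquiv l l' ∧ HeadPair R l') {n : ℕ} {W : List (List ℕ)}
    (hwords : ∀ l ∈ normalWords (fun a b => R' a b ∧ ¬ P' a b) LabelClose, HasInvariantSet l ∨
      ∃ w ∈ W, HeadPair P' (braidWord w (l.rotate n))) :
    ∃ l', BraidEquiv l l' ∧ HeadPair P l' := by
  obtain ⟨l₁, hbraid₁, hR₁⟩ := h
  by_cases hP₁ : HeadPair P l₁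
  · exact ⟨l₁, hbraid₁, hP₁⟩
  obtain ⟨l₂, hbraid₂, hRP₂, hclose₂⟩ :=
    (hl.of_braidEquiv hbraid₁).exists_braidEquiv_drop_two_headPair_close (hR₁.and_not hP₁)
  have hbraid := hbraid₁.trans hbraid₂
  obtain ⟨l₃, hbraid₃, hP₃⟩ := (hl.of_braidEquiv hbraid).exists_braidEquiv_headPair
    (hR.and_not hP) encodes_close hP hRP₂ hclose₂ hwords
  exact ⟨l₃, hbraid.trans hbraid₃, hP₃⟩

theorem exists_braidEquiv_headPair_sameSupport (hl : IsTransitiveFactorization l) :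
    ∃ l', BraidEquiv l l' ∧ HeadPair SameSupport l' := by
  have hcommute : ∃ l', BraidEquiv l l' ∧ HeadPair Commute l' :=
    hl.exists_braidEquiv_headPair_of_normalWords encodes_close encodes_commute
      hl.exists_braidEquiv_headPair_close (n := 0)
      (by simpa only [List.rotate_zero] using exists_braidWord_headPair_commute)
  exact hl.exists_braidEquiv_headPair_of_normalWords encodes_commute encodes_sameSupport
    hcommute exists_braidWord_headPair_sameSupport

theorem exists_braidEquiv_headPair_eq_or (hl : IsTransitiveFactorization l) :
    ∃ l', BraidEquiv l l' ∧ (HeadPair Eq l' ∧ HeadPair Close (l'.drop 2) ∨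
      HeadPair (fun a b => SameSupport a b ∧ a ≠ b) l' ∧
        HeadPair (fun a b => Close a b ∧ ¬ Commute a b) (l'.drop 2)) := by
  have of_eq {l₁} (hbraid₁ : BraidEquiv l l₁) (heq : HeadPair Eq l₁) :
      ∃ l', BraidEquiv l l' ∧ HeadPair Eq l' ∧ HeadPair Close (l'.drop 2) := by
    obtain ⟨l₂, hbraid₂, h⟩ :=
      (hl.of_braidEquiv hbraid₁).exists_braidEquiv_drop_two_headPair_close heq
    exact ⟨l₂, hbraid₁.trans hbraid₂, h⟩
  obtain ⟨l₁, hbraid₁, hsupp₁⟩ := hl.exists_braidEquiv_headPair_sameSupport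
  obtain ⟨l₂, hbraid₂, hsupp₂, hclose₂⟩ :=
    (hl.of_braidEquiv hbraid₁).exists_braidEquiv_drop_two_headPair_close hsupp₁
  have hbraid := hbraid₁.trans hbraid₂
  by_cases heq : HeadPair Eq l₂
  · exact ⟨l₂, hbraid, .inl ⟨heq, hclose₂⟩⟩
  by_cases hcomm : HeadPair Commute (l₂.drop 2)
  · obtain ⟨l₃, hbraid₃, heq₃⟩ := (hl.of_braidEquiv hbraid).exists_braidEquiv_headPair
      (encodes_sameSupport.and_not encodes_eq) (encodes_close.and encodes_commute) encodes_eq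
      (hsupp₂.and_not heq) (hclose₂.and hcomm) exists_braidWord_headPair_eq
    obtain ⟨l₄, hbraid₄, h₄⟩ := of_eq (hbraid.trans hbraid₃) heq₃
    exact ⟨l₄, hbraid₄, .inl h₄⟩
  · exact ⟨l₂, hbraid, .inr ⟨hsupp₂.and_not heq, hclose₂.and_not hcomm⟩⟩

end IsTransitiveFactorization

theorem conjBraidEquiv_of_baseConj {α : Type*} {e e' : α ≃ {n // n < 6}}
    {l l' : List (Perm α)} (h : BaseConj (l.map (labelHom e)) (l'.map (labelHom e'))) :
    ConjBraidEquiv l l' := by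
  obtain ⟨t, ht, heq⟩ := h
  obtain ⟨T, rfl⟩ := mem_range_labelHom_of_mem_baseStabilizer e' ht
  have hinj : Function.Injective fun g => oneLine (labelHom e' g) := fun g h hgh =>
    labelHom_injective e' (labelHom_eq_of_oneLine_eq hgh)
  have hconj : l.map (MulAut.conj (e.trans e'.symm)) = l'.map (MulAut.conj T) := by
    refine List.map_injective_iff.2 hinj ?_
    simpa only [List.map_map, Function.comp_def, labelHom_conj, MulAut.conj_apply T, map_mul,
      map_inv] using heq
  exact (ConjBraidEquiv.conj l _).trans (hconj ▸ (ConjBraidEquiv.conj l' T).symm)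

theorem IsTransitiveFactorization.conjBraidEquiv {l : List (Perm (Fin 6))}
    (hl : IsTransitiveFactorization l) :
    ConjBraidEquiv l (List.ofFn tuple1) ∨ ConjBraidEquiv l (List.ofFn tuple2) ∨
      ConjBraidEquiv l (List.ofFn tuple3) := by
  obtain ⟨l₁, hbraid, ⟨heq, hclose⟩ | ⟨hsupp, hclose⟩⟩ := hl.exists_braidEquiv_headPair_eq_or
  all_goals have hl₁ := hl.of_braidEquiv hbraid
  · obtain ⟨e, he⟩ := hl₁.exists_map_labelHom_mem_normalWords encodes_eq encodes_close heq hclose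
    obtain ⟨w, -, hw⟩ := (exists_baseConj_labelTuple1_or_labelTuple2 _ he).resolve_left
      (hl₁.not_hasInvariantSet e)
    have hword := (hbraid.trans (braidEquiv_braidWord w l₁)).conjBraidEquiv
    rw [← map_braidWord, ← map_labelHom_tuple1, ← map_labelHom_tuple2Rotated] at hw
    obtain h | h := hw
    · exact .inl (hword.trans (conjBraidEquiv_of_baseConj h))
    · exact .inr (.inl (hword.trans
        ((conjBraidEquiv_of_baseConj h).trans conjBraidEquiv_tuple2Rotated)))
  · obtain ⟨e, he⟩ := hl₁.exists_map_labelHom_mem_normalWords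
      (encodes_sameSupport.and_not encodes_eq) (encodes_close.and_not encodes_commute) hsupp hclose
    obtain ⟨w, -, hw⟩ := (exists_baseConj_labelTuple3 _ he).resolve_left
      (hl₁.not_hasInvariantSet e)
    rw [← map_braidWord, ← map_labelHom_tuple3] at hw
    exact .inr (.inr ((hbraid.trans (braidEquiv_braidWord w l₁)).conjBraidEquiv.trans
      (conjBraidEquiv_of_baseConj hw)))

end Factorizations

/-- Every `5`-tuple of order-2 elements of `A₆` with product `1` and transitive
generated subgroup is related, by the equivalence relation generated by Hurwitz
moves and simultaneous `S₆`-conjugation, to exactly one of the three tuples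
`[1]`, `[2]`, `[3]`; these generate subgroups of orders `60`, `24` and `360`
respectively. -/
theorem stmt_18 :
    (∀ g : Fin 5 → Equiv.Perm (Fin 6),
      (∀ i, g i ∈ alternatingGroup (Fin 6)) → (∀ i, orderOf (g i) = 2) →
      (List.ofFn g).prod = 1 →
      (∀ x y : Fin 6, ∃ p ∈ Subgroup.closure (Set.range g), p x = y) →
      (Relation.EqvGen (AbsRel 5) g tuple1 ∨ Relation.EqvGen (AbsRel 5) g tuple2 ∨
        Relation.EqvGen (AbsRel 5) g tuple3)) ∧
    ¬ Relation.EqvGen (AbsRel 5) tuple1 tuple2 ∧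
    ¬ Relation.EqvGen (AbsRel 5) tuple1 tuple3 ∧
    ¬ Relation.EqvGen (AbsRel 5) tuple2 tuple3 ∧
    Nat.card (Subgroup.closure (Set.range tuple1)) = 60 ∧
    Nat.card (Subgroup.closure (Set.range tuple2)) = 24 ∧
    Nat.card (Subgroup.closure (Set.range tuple3)) = 360 := by
  have hrange (g : Fin 5 → Equiv.Perm (Fin 6)) : Set.range g = {x | x ∈ List.ofFn g} := by
    ext x
    exact List.mem_ofFn.symm
  simp only [eqvGen_absRel_iff, hrange]
  have hcard₁ := card_closure_tuple1
  have hcard₂ := card_closure_tuple2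
  have hcard₃ := card_closure_tuple3
  refine ⟨fun g heven horder hprod htrans => IsTransitiveFactorization.conjBraidEquiv ?_,
    fun h => ?_, fun h => ?_, fun h => ?_, hcard₁, hcard₂, hcard₃⟩
  · refine ⟨List.length_ofFn, List.forall_mem_ofFn_iff.2 fun i =>
      isDoubleTransposition_of_orderOf_eq_two (heven i) (horder i), hprod, ⟨fun x y => ?_⟩⟩
    obtain ⟨p, hp, rfl⟩ := htrans x y
    exact ⟨⟨p, hp⟩, rfl⟩
  all_goals
    have := h.card_closure_eq
    omega
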